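/- arXiv:1203.1478 — 2 statements merged into one kernel-verified Lean document; each statement's English description precedes it below -/
import Mathlib

section
/- Assume a(s)/(log s)^{2γ} → a_∞ and f(s)/e^{2βs} → f_∞ as s → +∞ with γ, β, a_∞, f_∞ > 0. Then there exists r with f(r) > 0, f ≥ 0 on (r,∞), and ∫_{g⁻¹(r)}^{+∞} ds/√(F(g(s))) < ∞, where F(t) = ∫_r^t f. -/
open Filter Topology MeasureTheory

theorem stmt_10 (a f g ginv : ℝ → ℝ) (ha : ContDiff ℝ 1 a) (ν : ℝ) (hν : 0 < ν)
    (hab : ∀ s, ν ≤ a s) (hf : ContDiff ℝ 1 f)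
    (hg : ∀ s, HasDerivAt g (1 / Real.sqrt (a (g s))) s) (hg0 : g 0 = 0)
    (hinv1 : ∀ s, ginv (g s) = s) (hinv2 : ∀ t, g (ginv t) = t)
    (γ β aInf fInf : ℝ) (hγ : 0 < γ) (hβ : 0 < β) (haInf : 0 < aInf) (hfInf : 0 < fInf)
    (haAsym : Tendsto (fun s => a s / (Real.log s) ^ (2 * γ)) atTop (𝓝 aInf))
    (hfAsym : Tendsto (fun s => f s / Real.exp (2 * β * s)) atTop (𝓝 fInf)) :
    ∃ r : ℝ, 0 < f r ∧ (∀ s, r < s → 0 ≤ f s) ∧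
      IntegrableOn (fun s => 1 / Real.sqrt (∫ τ in r..(g s), f τ))
        (Set.Ici (ginv r)) := by
  have hfc : Continuous f := hf.continuous
  have hgc : Continuous g := continuous_iff_continuousAt.2 fun s => (hg s).continuousAt
  have hgpos : ∀ s, 0 < 1 / Real.sqrt (a (g s)) := fun s =>
    one_div_pos.2 (Real.sqrt_pos.2 (hν.trans_le (hab _)))
  have hgm : StrictMono g := strictMono_of_deriv_pos fun s => by
    rw [(hg s).deriv]; exact hgpos s
  have hA : ∀ᶠ s in atTop, a s ≤ Real.exp (β * s) := by
    have h1 : ∀ᶠ s in atTop, a s / (Real.log s) ^ (2 * γ) < aInf + 1 :=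
      haAsym.eventually_lt_const (by linarith)
    have h2 := (isLittleO_log_rpow_rpow_atTop (2 * γ) (zero_lt_one)).def
      (show 0 < β / (aInf + 1) by positivity)
    filter_upwards [h1, h2, eventually_gt_atTop 1] with s h1 h2 h3
    have hl : 0 < Real.log s ^ (2 * γ) := Real.rpow_pos_of_pos (Real.log_pos h3) _
    rw [div_lt_iff₀ hl] at h1
    rw [Real.rpow_one, Real.norm_of_nonneg hl.le, Real.norm_of_nonneg (by linarith)] at h2
    have h4 : (aInf + 1) * Real.log s ^ (2 * γ) ≤ (aInf + 1) * (β / (aInf + 1) * s) := by gcongr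
    have h5 : (aInf + 1) * (β / (aInf + 1) * s) = β * s := by field_simp
    have := Real.add_one_le_exp (β * s)
    linarith
  have hF : ∀ᶠ s in atTop, fInf / 2 * Real.exp (2 * β * s) ≤ f s := by
    have h1 : ∀ᶠ s in atTop, fInf / 2 < f s / Real.exp (2 * β * s) :=
      hfAsym.eventually_const_lt (by linarith)
    filter_upwards [h1] with s h1
    rw [lt_div_iff₀ (Real.exp_pos _)] at h1
    exact h1.le
  obtain ⟨r, hr⟩ := eventually_atTop.1 (hA.and hF)
  have hfp : ∀ s, r ≤ s → 0 < f s := fun s hs =>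
    lt_of_lt_of_le (by positivity) (hr s hs).2
  refine ⟨r, hfp r le_rfl, fun s hs => (hfp s hs.le).le, ?_⟩
  set s0 := ginv r with hs0
  have hgs0 : g s0 = r := hinv2 r
  -- lower bound for F
  have hFl : ∀ t, r ≤ t → fInf / (4 * β) * (Real.exp (2 * β * t) - Real.exp (2 * β * r))
      ≤ ∫ τ in r..t, f τ := by
    intro t ht
    have h1 : ∫ τ in r..t, fInf / 2 * Real.exp (2 * β * τ)
        = fInf / (4 * β) * Real.exp (2 * β * t) - fInf / (4 * β) * Real.exp (2 * β * r) := by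
      apply intervalIntegral.integral_eq_sub_of_hasDerivAt
        (f := fun τ => fInf / (4 * β) * Real.exp (2 * β * τ))
      · intro x _
        have := ((((hasDerivAt_id x).const_mul (2 * β)).exp).const_mul (fInf / (4 * β)))
        have e : fInf / 2 * Real.exp (2 * β * x)
            = fInf / (4 * β) * (Real.exp (2 * β * id x) * (2 * β * 1)) := by
          simp only [id]
          field_simp
          ring
        rw [e]
        exact this
      · apply Continuous.intervalIntegrable; fun_prop
    rw [mul_sub, ← h1]
    apply intervalIntegral.integral_mono_on ht
    · apply Continuous.intervalIntegrable; fun_prop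
    · exact hfc.intervalIntegrable _ _
    · intro x hx; exact (hr x hx.1).2
  -- growth of u
  have hu : ∀ s, s0 ≤ s → Real.exp (β / 2 * r) + β / 2 * (s - s0) ≤ Real.exp (β / 2 * g s) := by
    intro s hs
    have hd : ∀ x, HasDerivAt (fun x => Real.exp (β / 2 * g x) - β / 2 * x)
        (Real.exp (β / 2 * g x) * (β / 2 * (1 / Real.sqrt (a (g x)))) - β / 2 * 1) x := fun x =>
      (((hg x).const_mul (β / 2)).exp).sub ((hasDerivAt_id x).const_mul (β / 2))
    have hm : MonotoneOn (fun x => Real.exp (β / 2 * g x) - β / 2 * x) (Set.Ici s0) := by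
      apply monotoneOn_of_deriv_nonneg (convex_Ici _)
      · exact fun x _ => (hd x).continuousAt.continuousWithinAt
      · exact fun x _ => (hd x).differentiableAt.differentiableWithinAt
      · intro x hx
        rw [interior_Ici] at hx
        rw [(hd x).deriv]
        have hgx : r ≤ g x := hgs0 ▸ (hgm hx).le
        have h1 : Real.sqrt (a (g x)) ≤ Real.exp (β / 2 * g x) := by
          apply Real.sqrt_le_iff.2 ⟨(Real.exp_pos _).le, ?_⟩
          rw [← Real.exp_nat_mul]
          refine (hr _ hgx).1.trans_eq ?_
          congr 1; push_cast; ring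
        have h2 : 0 < Real.sqrt (a (g x)) := Real.sqrt_pos.2 (hν.trans_le (hab _))
        have h3 : 1 ≤ Real.exp (β / 2 * g x) / Real.sqrt (a (g x)) := (one_le_div h2).2 h1
        have h4 : Real.exp (β / 2 * g x) * (β / 2 * (1 / Real.sqrt (a (g x)))) - β / 2 * 1
          = β / 2 * (Real.exp (β / 2 * g x) / Real.sqrt (a (g x)) - 1) := by ring
        rw [h4]
        exact mul_nonneg (by positivity) (by linarith)
    have := hm Set.self_mem_Ici hs hs
    simp only [hgs0] at this
    linarith
  -- combine
  obtain ⟨D, hD, hD1, hD4⟩ : ∃ D > 0, (∀ s, s0 < s → D * (s - s0) ≤ ∫ τ in r..(g s), f τ) ∧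
      (∀ s, s0 < s → D * (s - s0) ^ 4 ≤ ∫ τ in r..(g s), f τ) := by
    set v := Real.exp (β / 2 * r) with hv
    have hv0 : 0 < v := Real.exp_pos _
    have key : ∀ s, s0 < s → fInf / (4 * β) * (4 * v ^ 3 * (β / 2) * (s - s0)
        + (β / 2) ^ 4 * (s - s0) ^ 4) ≤ ∫ τ in r..(g s), f τ := by
      intro s hs
      refine le_trans ?_ (hFl (g s) (hgs0 ▸ (hgm hs).le))
      have e1 : ∀ t, Real.exp (2 * β * t) = Real.exp (β / 2 * t) ^ 4 := fun t => by
        rw [← Real.exp_nat_mul]; congr 1; push_cast; ring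
      rw [e1, e1, ← hv]
      have hy : 0 < β / 2 * (s - s0) := mul_pos (by positivity) (sub_pos.2 hs)
      have h4 := pow_le_pow_left₀ (by positivity) (hu s hs.le) 4
      apply mul_le_mul_of_nonneg_left _ (by positivity)
      have e2 : 4 * v ^ 3 * (β / 2) * (s - s0) + (β / 2) ^ 4 * (s - s0) ^ 4
        = 4 * v ^ 3 * (β / 2 * (s - s0)) + (β / 2 * (s - s0)) ^ 4 := by ring
      rw [e2]
      generalize β / 2 * (s - s0) = y at h4 hy ⊢
      have h5 : (v + y) ^ 4 = v ^ 4 + 4 * v ^ 3 * y + y ^ 4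
        + (6 * v ^ 2 * y ^ 2 + 4 * v * y ^ 3) := by ring
      have h6 : 0 ≤ 6 * v ^ 2 * y ^ 2 + 4 * v * y ^ 3 := by positivity
      linarith
    refine ⟨min (fInf / (4 * β) * (4 * v ^ 3 * (β / 2))) (fInf / (4 * β) * (β / 2) ^ 4),
      by positivity, fun s hs => ?_, fun s hs => ?_⟩
    · have hx : 0 < s - s0 := sub_pos.2 hs
      refine le_trans (mul_le_mul_of_nonneg_right (min_le_left _ _) hx.le) (le_trans ?_ (key s hs))
      have : 0 ≤ fInf / (4 * β) * ((β / 2) ^ 4 * (s - s0) ^ 4) := by positivity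
      linarith
    · have hx : 0 < s - s0 := sub_pos.2 hs
      refine le_trans (mul_le_mul_of_nonneg_right (min_le_right _ _) (by positivity))
        (le_trans ?_ (key s hs))
      have : 0 ≤ fInf / (4 * β) * (4 * v ^ 3 * (β / 2) * (s - s0)) := by positivity
      linarith
  have hmeas : Measurable (fun s => 1 / Real.sqrt (∫ τ in r..(g s), f τ)) := by
    have h1 : Continuous fun t => ∫ τ in r..t, f τ :=
      intervalIntegral.continuous_primitive (fun _ _ => hfc.intervalIntegrable _ _) r
    have h2 : Continuous fun s => Real.sqrt (∫ τ in r..(g s), f τ) :=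
      Real.continuous_sqrt.comp (h1.comp hgc)
    exact measurable_const.div h2.measurable
  rw [integrableOn_Ici_iff_integrableOn_Ioi,
    ← Set.Ioc_union_Ioi_eq_Ioi (show s0 ≤ s0 + 1 by linarith), integrableOn_union]
  constructor
  · have hi : IntegrableOn (fun s => (1 / Real.sqrt D) * (s - s0) ^ (-(1/2) : ℝ))
        (Set.Ioc s0 (s0 + 1)) := by
      apply Integrable.const_mul
      have h := (intervalIntegral.intervalIntegrable_rpow' (a := 0) (b := 1)
        (show (-1:ℝ) < -(1/2) by norm_num)).comp_sub_right s0
      rw [intervalIntegrable_iff_integrableOn_Ioc_of_le (by linarith)] at h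
      rw [zero_add, add_comm] at h
      exact h
    refine Integrable.mono' hi hmeas.aestronglyMeasurable ?_
    refine (ae_restrict_iff' measurableSet_Ioc).2 (Eventually.of_forall fun s hs => ?_)
    have hx : 0 < s - s0 := sub_pos.2 hs.1
    rw [Real.norm_of_nonneg (by positivity), Real.rpow_neg hx.le, ← Real.sqrt_eq_rpow,
      ← one_div, one_div_mul_one_div, ← Real.sqrt_mul hD.le]
    exact one_div_le_one_div_of_le (Real.sqrt_pos.2 (by positivity))
      (Real.sqrt_le_sqrt (hD1 s hs.1))
  · have hi : IntegrableOn (fun s => (1 / Real.sqrt D) * (s + -s0) ^ (-2 : ℝ))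
        (Set.Ioi (s0 + 1)) := by
      apply Integrable.const_mul
      exact integrableOn_add_rpow_Ioi_of_lt (by norm_num) (by linarith)
    refine Integrable.mono' hi hmeas.aestronglyMeasurable ?_
    refine (ae_restrict_iff' measurableSet_Ioi).2 (Eventually.of_forall fun s hs => ?_)
    have hs' : s0 < s := lt_trans (by linarith) (Set.mem_Ioi.1 hs)
    have hx : 0 < s - s0 := sub_pos.2 hs'
    have e : Real.sqrt (D * (s - s0) ^ 4) = Real.sqrt D * (s - s0) ^ 2 := by
      rw [Real.sqrt_mul hD.le, show (s - s0) ^ 4 = ((s - s0) ^ 2) ^ 2 by ring,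
        Real.sqrt_sq (by positivity)]
    rw [Real.norm_of_nonneg (by positivity), ← sub_eq_add_neg, Real.rpow_neg hx.le,
      Real.rpow_two, ← one_div, one_div_mul_one_div, ← e]
    exact one_div_le_one_div_of_le (Real.sqrt_pos.2 (by positivity))
      (Real.sqrt_le_sqrt (hD4 s hs'))
end

section
/- Assume a(s)/s^k → a_∞ and f(s)/s^p → f_∞ as s → +∞ with k, a_∞, f_∞ > 0 and p > k + 1, with f ≥ 0 vanishing on (-∞,0] and positive on (0,∞). Let F(t) = ∫_0^t f, g the solution of g' = 1/√(a∘g), g(0)=0, and η the unique solution of η' = −√(2F(g(η))) with η(t) → +∞ as t → 0+. Then lim_{t→0+} η(t) t^{(k+2)/(p−k−1)} = Γ₀, where Γ₀ = [ ((p−k−1)/(k+2)) · √(2f_∞)/√(p+1) · ((k+2)/(2√a_∞))^{(p+1)/(k+2)} ]^{(k+2)/(k+1−p)}. -/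
open Filter Topology MeasureTheory

lemma aux_div_tendsto (h h' : ℝ → ℝ) (L : ℝ) (hd : ∀ᶠ s in atTop, HasDerivAt h (h' s) s)
    (hl : Tendsto h' atTop (𝓝 L)) : Tendsto (fun s => h s / s) atTop (𝓝 L) := by
  rw [Metric.tendsto_atTop]
  intro ε hε
  have h1 : ∀ᶠ s in atTop, dist (h' s) L < ε / 2 :=
    hl.eventually (Metric.ball_mem_nhds L (half_pos hε))
  obtain ⟨S, hS⟩ := eventually_atTop.1 (hd.and h1)
  have key : ∀ s ≥ S, |(h s - L * s) - (h S - L * S)| ≤ ε / 2 * (s - S) := by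
    intro s hs
    have := (convex_Ici S).norm_image_sub_le_of_norm_hasDerivWithin_le (𝕜 := ℝ)
      (f := fun s => h s - L * s) (f' := fun s => h' s - L * 1) (C := ε / 2)
      (fun x hx => (((hS x hx).1).sub ((hasDerivAt_id x).const_mul L)).hasDerivWithinAt)
      (fun x hx => by
        have := (hS x hx).2
        rw [Real.dist_eq] at this
        rw [Real.norm_eq_abs, mul_one]; exact this.le)
      (show S ∈ Set.Ici S from le_refl S) (show s ∈ Set.Ici S from hs)
    rw [Real.norm_eq_abs, Real.norm_eq_abs, abs_of_nonneg (sub_nonneg.2 hs)] at this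
    exact this
  set B := |h S - L * S| with hB
  refine ⟨max (max S 1) ((2 * B + ε * |S|) / ε + 1), fun s hs => ?_⟩
  have hs1 : S ≤ s := le_trans (le_trans (le_max_left _ _) (le_max_left _ _)) hs
  have hs2 : 1 ≤ s := le_trans (le_trans (le_max_right _ _) (le_max_left _ _)) hs
  have hs3 : (2 * B + ε * |S|) / ε + 1 ≤ s := le_trans (le_max_right _ _) hs
  have hs0 : 0 < s := by linarith
  have hs4 : 2 * B + ε * |S| < s * ε := by
    rw [← div_lt_iff₀ hε]; linarith
  have k1 := key s hs1
  have k2 : |h s - L * s| ≤ ε / 2 * (s - S) + B := by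
    have := abs_add_le ((h s - L * s) - (h S - L * S)) (h S - L * S)
    rw [sub_add_cancel] at this
    linarith
  have e : h s / s - L = (h s - L * s) / s := by field_simp
  rw [Real.dist_eq, e, abs_div, abs_of_pos hs0, div_lt_iff₀ hs0]
  have := neg_abs_le S
  nlinarith

lemma aux_g_atTop (a g : ℝ → ℝ) (ha : Continuous a) (ν : ℝ) (hν : 0 < ν)
    (hab : ∀ s, ν ≤ a s) (hg : ∀ s, HasDerivAt g (1 / Real.sqrt (a (g s))) s) :
    Tendsto g atTop atTop := by
  have hpos : ∀ s, 0 < a s := fun s => lt_of_lt_of_le hν (hab s)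
  have hm : Monotone g := monotone_of_hasDerivAt_nonneg hg (fun s => by positivity)
  rcases tendsto_of_monotone hm with h | ⟨l, hl⟩
  · exact h
  · exfalso
    have h1 : Tendsto (fun s => 1 / Real.sqrt (a (g s))) atTop (𝓝 (1 / Real.sqrt (a l))) := by
      have h2 : Tendsto (fun s => Real.sqrt (a (g s))) atTop (𝓝 (Real.sqrt (a l))) :=
        ((Real.continuous_sqrt.comp ha).tendsto l).comp hl
      exact tendsto_const_nhds.div h2 (Real.sqrt_pos.2 (hpos l)).ne'
    have h3 := aux_div_tendsto g _ _ (Eventually.of_forall hg) h1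
    have h4 : Tendsto (fun s => g s / s) atTop (𝓝 0) := hl.div_atTop tendsto_id
    have := tendsto_nhds_unique h3 h4
    have h5 := Real.sqrt_pos.2 (hpos l)
    have : 0 < 1 / Real.sqrt (a l) := by positivity
    linarith

lemma aux_g_asym (a g : ℝ → ℝ) (ν : ℝ) (hν : 0 < ν)
    (hab : ∀ s, ν ≤ a s) (hg : ∀ s, HasDerivAt g (1 / Real.sqrt (a (g s))) s)
    (hgt : Tendsto g atTop atTop) (k aInf : ℝ) (hk : 0 < k) (haInf : 0 < aInf)
    (haAsym : Tendsto (fun s => a s / s ^ k) atTop (𝓝 aInf)) :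
    Tendsto (fun s => g s ^ ((k + 2) / 2) / s) atTop (𝓝 ((k + 2) / (2 * Real.sqrt aInf))) := by
  have hgp : ∀ᶠ s in atTop, 0 < g s := hgt.eventually_gt_atTop 0
  refine aux_div_tendsto (fun s => g s ^ ((k + 2) / 2))
    (fun s => (1 / Real.sqrt (a (g s))) * ((k + 2) / 2) * g s ^ ((k + 2) / 2 - 1)) _ ?_ ?_
  · filter_upwards [hgp] with s hs
    exact (hg s).rpow_const (Or.inl hs.ne')
  · have h1 : Tendsto (fun s => (k + 2) / (2 * Real.sqrt (a (g s) / g s ^ k))) atTop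
        (𝓝 ((k + 2) / (2 * Real.sqrt aInf))) := by
      have h2 : Tendsto (fun s => Real.sqrt (a (g s) / g s ^ k)) atTop (𝓝 (Real.sqrt aInf)) :=
        (Real.continuous_sqrt.tendsto aInf).comp (haAsym.comp hgt)
      exact tendsto_const_nhds.div (h2.const_mul 2)
        (mul_pos two_pos (Real.sqrt_pos.2 haInf)).ne'
    refine h1.congr' ?_
    filter_upwards [hgp] with s hs
    have hap : 0 < a (g s) := lt_of_lt_of_le hν (hab _)
    have hsa := Real.sqrt_pos.2 hap
    have hgk : Real.sqrt (g s ^ k) = g s ^ ((k + 2) / 2 - 1) := by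
      rw [Real.sqrt_eq_rpow, ← Real.rpow_mul hs.le]; congr 1; ring
    have hgk0 : 0 < g s ^ ((k + 2) / 2 - 1) := Real.rpow_pos_of_pos hs _
    rw [Real.sqrt_div hap.le, hgk]
    field_simp

lemma aux_F_asym (f F : ℝ → ℝ) (hf : Continuous f) (p fInf : ℝ) (hp : 0 < p)
    (hfAsym : Tendsto (fun s => f s / s ^ p) atTop (𝓝 fInf))
    (hF : ∀ t, F t = ∫ τ in (0:ℝ)..t, f τ) :
    Tendsto (fun x => F x / x ^ (p + 1)) atTop (𝓝 (fInf / (p + 1))) := by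
  have hFd : ∀ x, HasDerivAt F (f x) x := by
    intro x
    have : F = fun t => ∫ τ in (0:ℝ)..t, f τ := funext hF
    rw [this]
    exact intervalIntegral.integral_hasDerivAt_right (hf.intervalIntegrable _ _)
      (hf.stronglyMeasurableAtFilter _ _) hf.continuousAt
  have hr : 0 < 1 / (p + 1) := by positivity
  have ht : Tendsto (fun u : ℝ => u ^ (1 / (p + 1))) atTop atTop := tendsto_rpow_atTop hr
  have main : Tendsto (fun u : ℝ => F (u ^ (1 / (p + 1))) / u) atTop (𝓝 (fInf / (p + 1))) := by
    refine aux_div_tendsto (fun u : ℝ => F (u ^ (1 / (p + 1))))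
      (fun u => f (u ^ (1 / (p + 1))) * (1 / (p + 1) * u ^ (1 / (p + 1) - 1))) _ ?_ ?_
    · filter_upwards [eventually_gt_atTop 0] with u hu
      exact (hFd _).comp u (Real.hasDerivAt_rpow_const (Or.inl hu.ne'))
    · have h1 := (hfAsym.comp ht).div_const (p + 1)
      refine h1.congr' ?_
      filter_upwards [eventually_gt_atTop 0] with u hu
      have e : (u ^ (1 / (p + 1) - 1))  = ((u ^ (1 / (p + 1))) ^ p)⁻¹ := by
        rw [← Real.rpow_mul hu.le, ← Real.rpow_neg hu.le]; congr 1; field_simp; ring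
      simp only [Function.comp]
      rw [e]
      ring
  have h2 := main.comp (tendsto_rpow_atTop (show 0 < p + 1 by linarith))
  refine h2.congr' ?_
  filter_upwards [eventually_gt_atTop 0] with x hx
  simp only [Function.comp]
  rw [← Real.rpow_mul hx.le, mul_one_div_cancel (by linarith), Real.rpow_one]

theorem stmt_18 (a f g η : ℝ → ℝ) (ha : ContDiff ℝ 1 a) (ν : ℝ) (hν : 0 < ν)
    (hab : ∀ s, ν ≤ a s) (hf : ContDiff ℝ 1 f)
    (hf0 : ∀ s ≤ (0:ℝ), f s = 0) (hfpos : ∀ s > (0:ℝ), 0 < f s)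
    (hg : ∀ s, HasDerivAt g (1 / Real.sqrt (a (g s))) s) (hg0 : g 0 = 0)
    (k p aInf fInf : ℝ) (hk : 0 < k) (hp : k + 1 < p)
    (haInf : 0 < aInf) (hfInf : 0 < fInf)
    (haAsym : Tendsto (fun s => a s / s ^ k) atTop (𝓝 aInf))
    (hfAsym : Tendsto (fun s => f s / s ^ p) atTop (𝓝 fInf))
    (F : ℝ → ℝ) (hF : ∀ t, F t = ∫ τ in (0:ℝ)..t, f τ)
    (hη : ∀ t > (0:ℝ), HasDerivAt η (-Real.sqrt (2 * F (g (η t)))) t)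
    (hηblow : Tendsto η (𝓝[>] (0:ℝ)) atTop) :
    Tendsto (fun t => η t * t ^ ((k + 2) / (p - k - 1))) (𝓝[>] (0:ℝ))
      (𝓝 ((((p - k - 1) / (k + 2)) * (Real.sqrt (2 * fInf) / Real.sqrt (p + 1)) *
        ((k + 2) / (2 * Real.sqrt aInf)) ^ ((p + 1) / (k + 2)))
          ^ ((k + 2) / (k + 1 - p)))) := by
  have hp1 : 0 < p + 1 := by linarith
  have hk2 : 0 < k + 2 := by linarith
  have hd : 0 < p - k - 1 := by linarith
  have hgt := aux_g_atTop a g ha.continuous ν hν hab hg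
  have hga := aux_g_asym a g ν hν hab hg hgt k aInf hk haInf haAsym
  have hFa := aux_F_asym f F hf.continuous p fInf (by linarith) hfAsym hF
  set c := (k + 2) / (2 * Real.sqrt aInf) with hc
  have hsa : 0 < Real.sqrt aInf := Real.sqrt_pos.2 haInf
  have hcpos : 0 < c := by positivity
  set q := (p + 1) / (k + 2) with hq
  have hqpos : 0 < q := by positivity
  have hq1 : (p - k - 1) / (k + 2) = q - 1 := by rw [hq]; field_simp; ring
  have hq1pos : 0 < q - 1 := by rw [← hq1]; positivity
  have he1 : (k + 2) / (p - k - 1) = 1 / (q - 1) := by rw [← hq1, one_div_div]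
  have he2 : (k + 2) / (k + 1 - p) = -(1 / (q - 1)) := by
    rw [← he1, ← div_neg]; congr 1; ring
  set K := Real.sqrt (2 * fInf) / Real.sqrt (p + 1) * c ^ q with hK
  have hKpos : 0 < K := by positivity
  have hsq : Tendsto (fun s => Real.sqrt (2 * F (g s)) / s ^ q) atTop (𝓝 K) := by
    have h1 : Tendsto (fun s => Real.sqrt (2 * (F (g s) / g s ^ (p + 1)))
        * (g s ^ ((k + 2) / 2) / s) ^ q) atTop
        (𝓝 (Real.sqrt (2 * (fInf / (p + 1))) * c ^ q)) := by
      refine Tendsto.mul ?_ (hga.rpow_const (Or.inl hcpos.ne'))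
      exact (Real.continuous_sqrt.tendsto _).comp ((hFa.comp hgt).const_mul 2)
    have e : Real.sqrt (2 * (fInf / (p + 1))) * c ^ q = K := by
      rw [hK, ← mul_div_assoc, Real.sqrt_div (by positivity)]
    rw [e] at h1
    refine h1.congr' ?_
    filter_upwards [hgt.eventually_gt_atTop 0, eventually_gt_atTop 0] with s hs hs0
    have e1 : (g s ^ ((k + 2) / 2)) ^ q = Real.sqrt (g s ^ (p + 1)) := by
      rw [Real.sqrt_eq_rpow, ← Real.rpow_mul hs.le, ← Real.rpow_mul hs.le, hq]
      congr 1; field_simp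
    have hgp : 0 < g s ^ (p + 1) := Real.rpow_pos_of_pos hs _
    have hgs := Real.sqrt_pos.2 hgp
    rw [Real.div_rpow (Real.rpow_nonneg hs.le _) hs0.le, e1, ← mul_div_assoc, ← mul_div_assoc,
      Real.sqrt_div' _ hgp.le]
    field_simp
  have hηp : ∀ᶠ t in 𝓝[>] (0:ℝ), 0 < η t := hηblow.eventually_gt_atTop 0
  have hφ : Tendsto (fun t => η t ^ (1 - q) / t) (𝓝[>] (0:ℝ)) (𝓝 ((q - 1) * K)) := by
    refine HasDerivAt.lhopital_zero_nhdsGT (f := fun t => η t ^ (1 - q)) (g := fun t => t)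
      (f' := fun t => (-Real.sqrt (2 * F (g (η t)))) * (1 - q) * η t ^ (1 - q - 1))
      (g' := fun _ => 1) ?_ ?_ ?_ ?_ ?_ ?_
    · filter_upwards [hηp, self_mem_nhdsWithin] with t ht ht0
      exact (hη t ht0).rpow_const (Or.inl ht.ne')
    · exact Eventually.of_forall fun t => hasDerivAt_id t
    · exact Eventually.of_forall fun t => one_ne_zero
    · have := (tendsto_rpow_neg_atTop hq1pos).comp hηblow
      rw [neg_sub] at this
      exact this
    · exact tendsto_id.mono_left nhdsWithin_le_nhds
    · refine ((hsq.comp hηblow).const_mul (q - 1)).congr' ?_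
      filter_upwards [hηp] with t ht
      have e : η t ^ (1 - q - 1) = (η t ^ q)⁻¹ := by
        rw [← Real.rpow_neg ht.le]; congr 1; ring
      simp only [Function.comp]
      rw [e]; ring
  have hL : 0 < (q - 1) * K := by positivity
  have hfin := hφ.rpow_const (p := -(1 / (q - 1))) (Or.inl hL.ne')
  rw [he1, he2, hq1, mul_assoc]
  refine hfin.congr' ?_
  filter_upwards [hηp, self_mem_nhdsWithin] with t ht ht0
  have ht0' : 0 < t := ht0
  rw [Real.div_rpow (Real.rpow_nonneg ht.le _) ht0'.le, ← Real.rpow_mul ht.le,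
    Real.rpow_neg ht0'.le, div_inv_eq_mul]
  have e : (1 - q) * -(1 / (q - 1)) = 1 := by field_simp; ring
  rw [e, Real.rpow_one]
end
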